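/- Let μ be a probability measure on a measurable space Ω, let y : Ω → {−1,+1} and f₁, f₂ : Ω → ℝ be measurable with |f₁| ≤ 1, |f₂| ≤ 1 and f₁ ω ≠ 0, f₂ ω ≠ 0 for μ-almost every ω. Let DIS = {ω : f₁ ω · f₂ ω < 0} with μ(DIS) > 0, define G and R on Ω by G ω = |f₁ ω| if f₁ ω · y ω > 0 and G ω = |f₂ ω| otherwise, R ω = |f₂ ω| if f₁ ω · y ω > 0 and R ω = |f₁ ω| otherwise. Let C ≥ 0 and k ≥ 0 be reals, and suppose: (a) under μ[·|DIS] the random variables G and R are independent; (b) for every t ∈ (0,1], μ(G ≤ t | DIS) ≤ C·t^k; (c) err₁ ≤ err₂, where err_v = μ{f_v · y < 0}; and (d) C·∫_{DIS} (R ω)^k dμ < (err₁ − err₂ + d)/2, where d = μ(DIS). Then μ{ω : (f₁ ω + f₂ ω) · y ω ≤ 0} < err₁. -/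

import Mathlib

open MeasureTheory
open scoped ProbabilityTheory

/-! Write `u = f₁ * y` and `v = f₂ * y` for the signed margins. Where the classifiers agree, the
combination errs exactly when both of them do, so its error differs from that of `f₁` only on the
disagreed region `D`. There exactly one classifier errs, so `f₁` errs with mass
`(err₁ - err₂ + d) / 2`, while the combination errs exactly when `G ≤ R`. By independence the event
`G ≤ R` can be integrated over `G` first, which bounds its mass by the integral over `D` of the tail
bound evaluated at `R`.
-/

section Independence

variable {Ω α β : Type*} [MeasurableSpace Ω] [MeasurableSpace α] [MeasurableSpace β]
  {X : Ω → α} {Y : Ω → β} {s : Set (α × β)}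

theorem measure_prodMk_mem_eq_lintegral_of_indepFun {ν : Measure Ω} [IsFiniteMeasure ν]
    (hX : Measurable X) (hY : Measurable Y) (hs : MeasurableSet s)
    (hXY : ProbabilityTheory.IndepFun X Y ν) :
    ν {ω | (X ω, Y ω) ∈ s} = ∫⁻ ω, ν {x | (X x, Y ω) ∈ s} ∂ν := by
  have hmap := (ProbabilityTheory.indepFun_iff_map_prod_eq_prod_map_map
    hX.aemeasurable hY.aemeasurable).1 hXY
  calc
    ν {ω | (X ω, Y ω) ∈ s} = ν.map (fun ω ↦ (X ω, Y ω)) s :=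
      (Measure.map_apply (hX.prodMk hY) hs).symm
    _ = ∫⁻ b, ν.map X ((fun a ↦ (a, b)) ⁻¹' s) ∂ν.map Y := by
      rw [hmap, Measure.prod_apply_symm hs]
    _ = ∫⁻ ω, ν.map X ((fun a ↦ (a, Y ω)) ⁻¹' s) ∂ν :=
      lintegral_map (measurable_measure_prodMk_right hs) hY
    _ = ∫⁻ ω, ν {x | (X x, Y ω) ∈ s} ∂ν :=
      lintegral_congr fun ω ↦ Measure.map_apply hX (measurable_prodMk_right hs)

theorem measureReal_prodMk_mem_le_integral_of_indepFun {ν : Measure Ω} [IsFiniteMeasure ν]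
    (hX : Measurable X) (hY : Measurable Y) (hs : MeasurableSet s)
    (hXY : ProbabilityTheory.IndepFun X Y ν) {g : Ω → ℝ} (hg : Integrable g ν)
    (hle : ∀ᵐ ω ∂ν, ν.real {x | (X x, Y ω) ∈ s} ≤ g ω) :
    ν.real {ω | (X ω, Y ω) ∈ s} ≤ ∫ ω, g ω ∂ν := by
  have hg0 : 0 ≤ᵐ[ν] g := hle.mono fun ω hω ↦ measureReal_nonneg.trans hω
  refine ENNReal.toReal_le_of_le_ofReal (integral_nonneg_of_ae hg0) ?_
  rw [measure_prodMk_mem_eq_lintegral_of_indepFun hX hY hs hXY,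
    ofReal_integral_eq_lintegral_ofReal hg hg0]
  refine lintegral_mono_ae (hle.mono fun ω hω ↦ ?_)
  rw [← ofReal_measureReal]
  exact ENNReal.ofReal_le_ofReal hω

theorem measureReal_inter_prodMk_mem_le_setIntegral_of_indepFun_cond {μ : Measure Ω}
    [IsFiniteMeasure μ] {D : Set Ω} (hD : MeasurableSet D)
    (hX : Measurable X) (hY : Measurable Y) (hs : MeasurableSet s)
    (hXY : ProbabilityTheory.IndepFun X Y μ[|D]) {g : Ω → ℝ} (hg : IntegrableOn g D μ)
    (hle : ∀ ω ∈ D, μ[|D].real {x | (X x, Y ω) ∈ s} ≤ g ω) :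
    μ.real (D ∩ {ω | (X ω, Y ω) ∈ s}) ≤ ∫ ω in D, g ω ∂μ := by
  rcases eq_or_ne (μ D) 0 with hD0 | hD0
  · rw [Measure.restrict_eq_zero.2 hD0, integral_zero_measure,
      measureReal_def, measure_inter_null_of_null_left _ hD0, ENNReal.toReal_zero]
  have hcond : μ[|D].real {ω | (X ω, Y ω) ∈ s} ≤ ∫ ω, g ω ∂μ[|D] :=
    measureReal_prodMk_mem_le_integral_of_indepFun hX hY hs hXY
      (hg.smul_measure (ENNReal.inv_ne_top.2 hD0))
      ((ProbabilityTheory.ae_cond_mem hD).mono hle)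
  rw [measureReal_def, ProbabilityTheory.cond_apply hD, ENNReal.toReal_mul,
    ProbabilityTheory.cond, integral_smul_measure, ENNReal.toReal_inv, smul_eq_mul] at hcond
  exact le_of_mul_le_mul_left hcond (inv_pos.2 (ENNReal.toReal_pos hD0 (measure_ne_top μ D)))

end Independence

section Disagreement

variable {Ω : Type*}

/-- The disagreed region of two margin-based classifiers, where they predict opposite signs.
Points at which one of them vanishes are not counted. -/
def disagreement (f₁ f₂ : Ω → ℝ) : Set Ω :=
  {ω | f₁ ω * f₂ ω < 0}

/-- The margin `G` of the classifier that is correct at `ω`; it has this meaning only on the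
disagreed region. -/
noncomputable def correctMargin (y f₁ f₂ : Ω → ℝ) (ω : Ω) : ℝ :=
  if 0 < f₁ ω * y ω then |f₁ ω| else |f₂ ω|

/-- The margin `R` of the classifier that is incorrect at `ω`; it has this meaning only on the
disagreed region. -/
noncomputable def incorrectMargin (y f₁ f₂ : Ω → ℝ) (ω : Ω) : ℝ :=
  if 0 < f₁ ω * y ω then |f₂ ω| else |f₁ ω|

theorem disagreement_mul_right {y : Ω → ℝ} (hy : ∀ ω, y ω ≠ 0) (f₁ f₂ : Ω → ℝ) :
    disagreement (f₁ * y) (f₂ * y) = disagreement f₁ f₂ := by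
  ext ω
  have hprod : (f₁ ω * y ω) * (f₂ ω * y ω) = (y ω * y ω) • (f₁ ω * f₂ ω) := by
    rw [mul_mul_mul_comm, mul_comm, smul_eq_mul]
  change (f₁ ω * y ω) * (f₂ ω * y ω) < 0 ↔ f₁ ω * f₂ ω < 0
  rw [hprod, smul_neg_iff_of_pos_left (mul_self_pos.2 (hy ω))]

theorem disagreement_eq_union (u v : Ω → ℝ) :
    disagreement u v = {ω | u ω < 0 ∧ 0 < v ω} ∪ {ω | v ω < 0 ∧ 0 < u ω} := by
  ext ω
  change u ω * v ω < 0 ↔ (u ω < 0 ∧ 0 < v ω) ∨ (v ω < 0 ∧ 0 < u ω)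
  rw [mul_neg_iff, or_comm, and_comm (a := 0 < u ω)]

theorem correctMargin_le_incorrectMargin_iff {y f₁ f₂ : Ω → ℝ} {ω : Ω} (hy : y ω ≠ 0)
    (hω : ω ∈ disagreement f₁ f₂) :
    correctMargin y f₁ f₂ ω ≤ incorrectMargin y f₁ f₂ ω ↔ (f₁ ω + f₂ ω) * y ω ≤ 0 := by
  have hsigns : 0 < f₁ ω ∧ f₂ ω < 0 ∨ f₁ ω < 0 ∧ 0 < f₂ ω := mul_neg_iff.1 hω
  rw [correctMargin, incorrectMargin]
  grind [mul_pos_iff, mul_nonpos_iff]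

theorem incorrectMargin_mem_Ioc {f₁ f₂ : Ω → ℝ} {b : ℝ} (hb₁ : ∀ ω, |f₁ ω| ≤ b)
    (hb₂ : ∀ ω, |f₂ ω| ≤ b) (y : Ω → ℝ) {ω : Ω} (hω : ω ∈ disagreement f₁ f₂) :
    incorrectMargin y f₁ f₂ ω ∈ Set.Ioc 0 b := by
  have hne : f₁ ω * f₂ ω ≠ 0 := ne_of_lt hω
  rw [incorrectMargin]
  split_ifs
  · exact ⟨abs_pos.2 (right_ne_zero_of_mul hne), hb₂ ω⟩
  · exact ⟨abs_pos.2 (left_ne_zero_of_mul hne), hb₁ ω⟩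

variable [MeasurableSpace Ω]

theorem measurableSet_disagreement {f₁ f₂ : Ω → ℝ} (hf₁ : Measurable f₁) (hf₂ : Measurable f₂) :
    MeasurableSet (disagreement f₁ f₂) :=
  measurableSet_lt (hf₁.mul hf₂) measurable_const

theorem measurable_correctMargin {y f₁ f₂ : Ω → ℝ} (hy : Measurable y) (hf₁ : Measurable f₁)
    (hf₂ : Measurable f₂) : Measurable (correctMargin y f₁ f₂) :=
  .ite (measurableSet_lt measurable_const (hf₁.mul hy)) hf₁.abs hf₂.abs

theorem measurable_incorrectMargin {y f₁ f₂ : Ω → ℝ} (hy : Measurable y) (hf₁ : Measurable f₁)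
    (hf₂ : Measurable f₂) : Measurable (incorrectMargin y f₁ f₂) :=
  .ite (measurableSet_lt measurable_const (hf₁.mul hy)) hf₂.abs hf₁.abs

theorem integrableOn_incorrectMargin_rpow (μ : Measure Ω) [IsFiniteMeasure μ] {y f₁ f₂ : Ω → ℝ}
    (hy : Measurable y) (hf₁ : Measurable f₁) (hf₂ : Measurable f₂) {b : ℝ}
    (hb₁ : ∀ ω, |f₁ ω| ≤ b) (hb₂ : ∀ ω, |f₂ ω| ≤ b) {k : ℝ} (hk : 0 ≤ k) :
    IntegrableOn (fun ω ↦ incorrectMargin y f₁ f₂ ω ^ k) (disagreement f₁ f₂) μ := by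
  have hmeas : Measurable fun ω ↦ incorrectMargin y f₁ f₂ ω ^ k :=
    (measurable_incorrectMargin hy hf₁ hf₂).pow_const k
  refine Measure.integrableOn_of_bounded (M := b ^ k) (measure_ne_top _ _)
    hmeas.aestronglyMeasurable ?_
  refine (ae_restrict_mem (measurableSet_disagreement hf₁ hf₂)).mono fun ω hω ↦ ?_
  obtain ⟨hpos, hle⟩ := incorrectMargin_mem_Ioc hb₁ hb₂ y hω
  rw [Real.norm_of_nonneg (Real.rpow_nonneg hpos.le k)]
  exact Real.rpow_le_rpow hpos.le hle hk

variable {μ : Measure Ω} [IsFiniteMeasure μ] {u v : Ω → ℝ}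

theorem measureReal_disagreement (hu : Measurable u) (hv : Measurable v) :
    μ.real (disagreement u v) =
      μ.real {ω | u ω < 0 ∧ 0 < v ω} + μ.real {ω | v ω < 0 ∧ 0 < u ω} := by
  rw [disagreement_eq_union]
  refine measureReal_union (Set.disjoint_left.2 fun ω h₁ h₂ ↦ h₁.1.not_gt h₂.2) ?_
  exact (measurableSet_lt hv measurable_const).inter (measurableSet_lt measurable_const hu)

theorem measureReal_neg_eq_add (hv : Measurable v) (hv0 : ∀ᵐ ω ∂μ, v ω ≠ 0) :
    μ.real {ω | u ω < 0} =
      μ.real {ω | u ω < 0 ∧ v ω < 0} + μ.real {ω | u ω < 0 ∧ 0 < v ω} := by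
  rw [← measureReal_inter_add_sdiff (s := {ω | u ω < 0}) (measurableSet_lt hv measurable_const)]
  refine congrArg (_ + ·) (measureReal_congr ?_)
  filter_upwards [hv0] with ω hω
  exact propext (and_congr_right fun _ ↦ not_lt.trans hω.symm.le_iff_lt)

theorem measureReal_add_nonpos_eq_add (hu : Measurable u) (hv : Measurable v)
    (hu0 : ∀ᵐ ω ∂μ, u ω ≠ 0) (hv0 : ∀ᵐ ω ∂μ, v ω ≠ 0) :
    μ.real {ω | u ω + v ω ≤ 0} =
      μ.real (disagreement u v ∩ {ω | u ω + v ω ≤ 0}) + μ.real {ω | u ω < 0 ∧ v ω < 0} := by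
  rw [← measureReal_inter_add_sdiff (s := {ω | u ω + v ω ≤ 0}) (measurableSet_disagreement hu hv),
    Set.inter_comm]
  refine congrArg (_ + ·) (measureReal_congr ?_)
  filter_upwards [hu0, hv0] with ω huω hvω
  refine propext (?_ : u ω + v ω ≤ 0 ∧ ¬ u ω * v ω < 0 ↔ u ω < 0 ∧ v ω < 0)
  rw [mul_neg_iff]
  grind

theorem measureReal_add_nonpos_sub_measureReal_neg (hu : Measurable u) (hv : Measurable v)
    (hu0 : ∀ᵐ ω ∂μ, u ω ≠ 0) (hv0 : ∀ᵐ ω ∂μ, v ω ≠ 0) :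
    μ.real {ω | u ω + v ω ≤ 0} - μ.real {ω | u ω < 0} =
      μ.real (disagreement u v ∩ {ω | u ω + v ω ≤ 0}) -
        (μ.real {ω | u ω < 0} - μ.real {ω | v ω < 0} + μ.real (disagreement u v)) / 2 := by
  have hcomm : {ω | v ω < 0 ∧ u ω < 0} = {ω | u ω < 0 ∧ v ω < 0} := by
    simp only [and_comm]
  have hneg₂ := measureReal_neg_eq_add (u := v) hu hu0
  rw [hcomm] at hneg₂
  linarith [measureReal_neg_eq_add (u := u) hv hv0, measureReal_disagreement (μ := μ) hu hv,
    measureReal_add_nonpos_eq_add hu hv hu0 hv0]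

end Disagreement

theorem stmt15_general {Ω : Type*} [MeasurableSpace Ω] (μ : Measure Ω) [IsFiniteMeasure μ]
    {y f₁ f₂ : Ω → ℝ} (hy : Measurable y) (hf₁ : Measurable f₁) (hf₂ : Measurable f₂)
    (hy0 : ∀ ω, y ω ≠ 0) (hne : ∀ᵐ ω ∂μ, f₁ ω ≠ 0 ∧ f₂ ω ≠ 0) (φ : ℝ → ℝ)
    (hφ : IntegrableOn (fun ω ↦ φ (incorrectMargin y f₁ f₂ ω)) (disagreement f₁ f₂) μ)
    (hindep : ProbabilityTheory.IndepFun (correctMargin y f₁ f₂) (incorrectMargin y f₁ f₂)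
      μ[|disagreement f₁ f₂])
    (htail : ∀ ω ∈ disagreement f₁ f₂,
      μ[|disagreement f₁ f₂].real {x | correctMargin y f₁ f₂ x ≤ incorrectMargin y f₁ f₂ ω} ≤
        φ (incorrectMargin y f₁ f₂ ω))
    (hrisk : ∫ ω in disagreement f₁ f₂, φ (incorrectMargin y f₁ f₂ ω) ∂μ <
      (μ.real {ω | f₁ ω * y ω < 0} - μ.real {ω | f₂ ω * y ω < 0}
        + μ.real (disagreement f₁ f₂)) / 2) :
    μ.real {ω | (f₁ ω + f₂ ω) * y ω ≤ 0} < μ.real {ω | f₁ ω * y ω < 0} := by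
  have hexcess := measureReal_add_nonpos_sub_measureReal_neg (μ := μ) (hf₁.mul hy) (hf₂.mul hy)
    (hne.mono fun ω hω ↦ mul_ne_zero hω.1 (hy0 ω)) (hne.mono fun ω hω ↦ mul_ne_zero hω.2 (hy0 ω))
  simp only [disagreement_mul_right hy0, Pi.mul_apply, ← add_mul] at hexcess
  have hevent : disagreement f₁ f₂ ∩ {ω | (f₁ ω + f₂ ω) * y ω ≤ 0} = disagreement f₁ f₂ ∩
      {ω | correctMargin y f₁ f₂ ω ≤ incorrectMargin y f₁ f₂ ω} :=
    Set.ext fun ω ↦ and_congr_right fun hω ↦ (correctMargin_le_incorrectMargin_iff (hy0 ω) hω).symm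
  have hbound : μ.real (disagreement f₁ f₂ ∩
      {ω | correctMargin y f₁ f₂ ω ≤ incorrectMargin y f₁ f₂ ω}) ≤
      ∫ ω in disagreement f₁ f₂, φ (incorrectMargin y f₁ f₂ ω) ∂μ :=
    measureReal_inter_prodMk_mem_le_setIntegral_of_indepFun_cond
      (measurableSet_disagreement hf₁ hf₂) (measurable_correctMargin hy hf₁ hf₂)
      (measurable_incorrectMargin hy hf₁ hf₂) (measurableSet_le measurable_fst measurable_snd)
      hindep hφ htail
  rw [← sub_neg, hexcess, hevent, sub_neg]
  exact hbound.trans_lt hrisk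

/-- when the confidence risk `C·∫_DIS R^k dμ` is smaller than
`(err₁ − err₂ + d)/2` (with `err₁ ≤ err₂`), the margin combination is strictly
better than the better individual classifier: `err_com < err₁`. -/
theorem stmt15 {Ω : Type*} [MeasurableSpace Ω] (μ : Measure Ω) [IsProbabilityMeasure μ]
    (y f₁ f₂ : Ω → ℝ) (hy : Measurable y) (hf₁ : Measurable f₁) (hf₂ : Measurable f₂)
    (hy1 : ∀ ω, y ω = 1 ∨ y ω = -1)
    (hb₁ : ∀ ω, |f₁ ω| ≤ 1) (hb₂ : ∀ ω, |f₂ ω| ≤ 1)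
    (hne : ∀ᵐ ω ∂μ, f₁ ω ≠ 0 ∧ f₂ ω ≠ 0)
    (G R : Ω → ℝ)
    (hG : ∀ ω, G ω = if 0 < f₁ ω * y ω then |f₁ ω| else |f₂ ω|)
    (hR : ∀ ω, R ω = if 0 < f₁ ω * y ω then |f₂ ω| else |f₁ ω|)
    (C k : ℝ) (hC : 0 ≤ C) (hk : 0 ≤ k)
    (hDIS : 0 < μ {ω | f₁ ω * f₂ ω < 0})
    (hindep : ProbabilityTheory.IndepFun G R (μ[|{ω | f₁ ω * f₂ ω < 0}]))
    (htsy : ∀ t ∈ Set.Ioc (0 : ℝ) 1,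
      ((μ[|{ω | f₁ ω * f₂ ω < 0}]) {ω | G ω ≤ t}).toReal ≤ C * t ^ k)
    (herr : (μ {ω | f₁ ω * y ω < 0}).toReal ≤ (μ {ω | f₂ ω * y ω < 0}).toReal)
    (hrisk : C * ∫ ω in {ω | f₁ ω * f₂ ω < 0}, R ω ^ k ∂μ <
      ((μ {ω | f₁ ω * y ω < 0}).toReal - (μ {ω | f₂ ω * y ω < 0}).toReal
        + (μ {ω | f₁ ω * f₂ ω < 0}).toReal) / 2) :
    (μ {ω | (f₁ ω + f₂ ω) * y ω ≤ 0}).toReal < (μ {ω | f₁ ω * y ω < 0}).toReal := by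
  obtain ⟨rfl, rfl⟩ : G = correctMargin y f₁ f₂ ∧ R = incorrectMargin y f₁ f₂ :=
    ⟨funext hG, funext hR⟩
  exact stmt15_general μ hy hf₁ hf₂ (fun ω ↦ by rcases hy1 ω with h | h <;> simp [h]) hne
    (fun t ↦ C * t ^ k) ((integrableOn_incorrectMargin_rpow μ hy hf₁ hf₂ hb₁ hb₂ hk).const_mul C)
    hindep (fun ω hω ↦ htsy _ (incorrectMargin_mem_Ioc hb₁ hb₂ y hω))
    (by rwa [integral_const_mul])
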